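/- There is an absolute constant C > 0 such that for every integer k ≥ 3 and every integer n ≥ k+1, the number of distinct values attained by the permanent on (k+1)×n ±1 matrices satisfies r_{k+1,n} ≥ k^(−C·k²) · n^(k−2). In particular one may take the explicit bound r_{k+1,n} ≥ (4·(16k⁵)^k)^{−(k−2)} · n^(k−2). -/

import Mathlib

/-- The permanent of a rectangular `k × n` real matrix. -/
noncomputable def rperm {k n : ℕ} (A : Matrix (Fin k) (Fin n) ℝ) : ℝ :=
  ∑ σ : Fin k ↪ Fin n, ∏ i, A i (σ i)

/-- `permCount k n = r_{k,n}`: the number of distinct values attained by the permanent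
on the set `Ω_{k,n}` of `k × n` matrices with `±1` entries. -/
noncomputable def permCount (k n : ℕ) : ℕ :=
  {x : ℝ | ∃ A : Matrix (Fin k) (Fin n) ℝ,
      (∀ i j, A i j = 1 ∨ A i j = -1) ∧ rperm A = x}.ncard

/-!
Let a row `v` choose its column freely and then correct for the collisions with the other rows: a
collision with row `r` amounts to multiplying row `r` entrywise by `v`. Iterating, the permanent of
`v` on top of rows `U` of `A` is
`∑_{S ⊆ U} (-1)^|S| |S|! (∑_j v_j ∏_{i ∈ S} A_ij) per(A_{U \ S})`,
so it depends on `v` only through its correlations with products of rows.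

Arrange some of the columns in blocks, each running through all sign vectors, and let `v` be
`± ∏_{s > t} A_s` on the blocks of level `t`. By orthogonality of characters these blocks are only
seen by the term `S = {s : s > t}`. The permanent thus becomes `c + 2^(k+2) ∑_t a_t w_t`, where
`a_t ∈ {0, …, M}` is the number of positive blocks of level `t`, and `|w_t|` has order `n^t` as soon
as most columns are constantly `1`. If `M` is a small enough multiple of `n`, each weight dominates
the previous ones, so the digits `a_t` can be read off from the sum, and `(M + 1)^(k + 1)` values
occur.
-/

open Finset

section RowPermanent

variable {ι κ : Type*} [Fintype κ]

/-- The permanent of the submatrix of `A` formed by the rows in `U`, with an arbitrary finite type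
of columns. It extends `rperm` to row subsets, which is what expanding along a row produces. -/
noncomputable def rowPerm {R : Type*} [CommRing R] (A : Matrix ι κ R) (U : Finset ι) : R :=
  ∑ f : U ↪ κ, ∏ i : U, A i (f i)

section Expansion

variable {R : Type*} [DecidableEq ι] [CommRing R]

lemma rowPerm_updateRow_mul (A : Matrix ι κ R) (v : κ → R) {U : Finset ι} (r : U) :
    rowPerm (A.updateRow r (v * A r)) U = ∑ f : U ↪ κ, (∏ i : U, A i (f i)) * v (f r) := by
  refine sum_congr rfl fun f _ => ?_
  have hentry (i : U) : A.updateRow r (v * A r) i (f i) =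
      A i (f i) * if i = r then v (f i) else 1 := by
    rw [Matrix.updateRow_apply]
    by_cases hir : i = r
    · simp [hir, mul_comm]
    · simp [hir]
  simp_rw [hentry, prod_mul_distrib, prod_ite_eq', mem_univ, if_true]

lemma sum_compl_range_embedding {α : Type*} [Fintype α] (f : α ↪ κ)
    [Fintype ↥(Set.range f)ᶜ] (v : κ → R) :
    ∑ x : ↥(Set.range f)ᶜ, v x = ∑ j, v j - ∑ i, v (f i) := by
  classical
  rw [eq_sub_iff_add_eq, ← sum_map univ f v, ← sum_subtype (univ.map f)ᶜ (by simp) v,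
    sum_compl_add_sum]

lemma rowPerm_insert_updateRow_eq_sum_embedding (A : Matrix ι κ R) (v : κ → R) {o : ι}
    {U : Finset ι} (ho : o ∉ U) :
    rowPerm (A.updateRow o v) (insert o U) =
      ∑ f : U ↪ κ, (∏ i : U, A i (f i)) * (∑ j, v j - ∑ i, v (f i)) := by
  classical
  let e := subtypeInsertEquivOption ho
  calc rowPerm (A.updateRow o v) (insert o U)
      = ∑ x : Σ f : U ↪ κ, ↥(Set.range f)ᶜ, (∏ i : U, A i (x.1 i)) * v x.2 := by
        refine Fintype.sum_equiv ((Equiv.embeddingCongr e (Equiv.refl κ)).trans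
          (Function.Embedding.optionEmbeddingEquiv U κ)) _ _ fun f => ?_
        rw [← Fintype.prod_equiv e.symm (fun i => A.updateRow o v (e.symm i) (f (e.symm i))) _
          fun _ => rfl, Fintype.prod_option, mul_comm]
        congr 1
        · refine prod_congr rfl fun i _ => ?_
          exact congrFun (Matrix.updateRow_ne (ne_of_mem_of_not_mem i.2 ho)) _
        · exact congrFun Matrix.updateRow_self _
    _ = _ := by
        simp_rw [Fintype.sum_sigma, ← mul_sum, sum_compl_range_embedding]

lemma rowPerm_insert_updateRow_eq_sub (A : Matrix ι κ R) (v : κ → R) {o : ι} {U : Finset ι}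
    (ho : o ∉ U) :
    rowPerm (A.updateRow o v) (insert o U) =
      (∑ j, v j) * rowPerm A U - ∑ r ∈ U, rowPerm (A.updateRow r (v * A r)) U := by
  simp_rw [rowPerm_insert_updateRow_eq_sum_embedding A v ho,
    ← sum_coe_sort U fun r => rowPerm (A.updateRow r (v * A r)) U, rowPerm_updateRow_mul,
    rowPerm, mul_sub, sum_sub_distrib, ← sum_mul, mul_comm (∑ j, v j)]
  rw [sum_comm]
  simp_rw [mul_sum]

lemma sum_sum_powerset_erase_insert {M : Type*} [AddCommMonoid M] (U : Finset ι)
    (g : Finset ι → M) :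
    ∑ r ∈ U, ∑ S ∈ (U.erase r).powerset, g (insert r S) = ∑ T ∈ U.powerset, #T • g T := by
  simp_rw [← sum_const, sum_sigma']
  refine sum_bij' (fun x _ => ⟨insert x.1 x.2, x.1⟩) (fun y _ => ⟨y.2, y.1.erase y.2⟩)
    ?_ ?_ ?_ ?_ ?_ <;> rintro ⟨_, _⟩ <;> simp <;> grind

theorem rowPerm_insert_updateRow (A : Matrix ι κ R) (v : κ → R) {o : ι} {U : Finset ι}
    (ho : o ∉ U) :
    rowPerm (A.updateRow o v) (insert o U) = ∑ S ∈ U.powerset,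
      (-1) ^ #S * ((#S).factorial : R) * (∑ j, v j * ∏ i ∈ S, A i j) * rowPerm A (U \ S) := by
  induction hu : #U generalizing U o v with
  | zero =>
    obtain rfl := card_eq_zero.mp hu
    rw [rowPerm_insert_updateRow_eq_sub A v ho]
    simp
  | succ u ih =>
    let g (T : Finset ι) : R := (-1) ^ (#T - 1) * ((#T - 1).factorial : R) *
      (∑ j, v j * ∏ i ∈ T, A i j) * rowPerm A (U \ T)
    have hmerge : ∀ r ∈ U, rowPerm (A.updateRow r (v * A r)) U =
        ∑ S ∈ (U.erase r).powerset, g (insert r S) := by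
      intro r hr
      conv_lhs => rw [← insert_erase hr]
      rw [ih (v * A r) (notMem_erase r U) (by rw [card_erase_of_mem hr, hu, Nat.add_sub_cancel])]
      refine sum_congr rfl fun S hS => ?_
      have hrS : r ∉ S := fun h => notMem_erase r U (mem_powerset.mp hS h)
      simp [g, card_insert_of_notMem hrS, prod_insert hrS, mul_assoc, sdiff_insert,
        erase_sdiff_comm]
    have hterm (T : Finset ι) : (-1) ^ #T * ((#T).factorial : R) *
        (∑ j, v j * ∏ i ∈ T, A i j) * rowPerm A (U \ T) =
        (if T = ∅ then (∑ j, v j) * rowPerm A U else 0) - #T • g T := by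
      obtain rfl | hT := T.eq_empty_or_nonempty
      · simp
      · obtain ⟨c, hc⟩ := Nat.exists_eq_add_one_of_ne_zero hT.card_pos.ne'
        simp only [g, hc, hT.ne_empty, if_false, Nat.factorial_succ, Nat.add_sub_cancel,
          nsmul_eq_mul, pow_succ]
        push_cast
        ring
    rw [rowPerm_insert_updateRow_eq_sub A v ho, sum_congr rfl hmerge,
      sum_sum_powerset_erase_insert, sum_congr rfl fun T _ => hterm T, sum_sub_distrib,
      sum_ite_eq', if_pos (empty_mem_powerset U)]

end Expansion

section Bounds

lemma abs_prod_le_one {α : Type*} {s : Finset α} {x : α → ℝ} (hx : ∀ i ∈ s, |x i| ≤ 1) :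
    |∏ i ∈ s, x i| ≤ 1 := by
  rw [abs_prod]
  exact prod_le_one (fun _ _ => abs_nonneg _) hx

lemma abs_rowPerm_le {A : Matrix ι κ ℝ} (hA : ∀ i j, |A i j| ≤ 1) (U : Finset ι) :
    |rowPerm A U| ≤ (Fintype.card κ : ℝ) ^ #U := by
  calc |rowPerm A U| ≤ ∑ f : U ↪ κ, |∏ i : U, A i (f i)| := abs_sum_le_sum_abs _ _
    _ ≤ ∑ _f : U ↪ κ, 1 := sum_le_sum fun f _ => abs_prod_le_one fun i _ => hA i (f i)
    _ = ((Fintype.card κ).descFactorial #U : ℝ) := by simp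
    _ ≤ (Fintype.card κ : ℝ) ^ #U := mod_cast Nat.descFactorial_le_pow _ _

-- The injections that land in the range of `g` contribute `1` each, the others at least `-1`.
lemma two_mul_descFactorial_sub_le_rowPerm {ρ : Type*} [Fintype ρ] {A : Matrix ι κ ℝ}
    (hA : ∀ i j, |A i j| ≤ 1) (g : ρ ↪ κ) (hg : ∀ i j, A i (g j) = 1) (U : Finset ι) :
    2 * ((Fintype.card ρ).descFactorial #U : ℝ) - (Fintype.card κ).descFactorial #U ≤
      rowPerm A U := by
  classical
  let G : Finset (U ↪ κ) := univ.map ⟨fun f : U ↪ ρ => f.trans g, fun f f' h => by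
    ext i; exact g.injective (DFunLike.congr_fun h i)⟩
  have hterm (f : U ↪ κ) : (if f ∈ G then 2 else 0) - 1 ≤ ∏ i : U, A i (f i) := by
    split_ifs with hf
    · obtain ⟨f', -, rfl⟩ := mem_map.mp hf
      have hone : ∏ i : U, A i (g (f' i)) = 1 := prod_eq_one fun i _ => hg i (f' i)
      exact (show (2 : ℝ) - 1 = 1 by norm_num).le.trans hone.ge
    · have habs : |∏ i : U, A i (f i)| ≤ 1 := abs_prod_le_one fun i _ => hA i (f i)
      linarith [neg_le_of_abs_le habs]
  calc 2 * ((Fintype.card ρ).descFactorial #U : ℝ) - (Fintype.card κ).descFactorial #U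
      = ∑ f : U ↪ κ, ((if f ∈ G then 2 else 0) - 1) := by
        rw [sum_sub_distrib, sum_ite_mem, univ_inter, sum_const, card_map]
        simp [mul_comm]
    _ ≤ rowPerm A U := sum_le_sum fun f _ => hterm f

lemma three_quarters_mul_pow_le_descFactorial {g r u : ℕ} (h : 4 * u * (g + u) ≤ g + r) :
    3 / 4 * ((g + r : ℕ) : ℝ) ^ u ≤ r.descFactorial u := by
  obtain rfl | hu := u.eq_zero_or_pos
  · norm_num
  have hur : u ≤ r := by nlinarith
  have hn : (0 : ℝ) < (g + r : ℕ) := by exact_mod_cast (by omega : 0 < g + r)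
  have hbern : (u : ℝ) * ((g + u : ℕ) / (g + r : ℕ)) ≤ 1 / 4 := by
    have h' : (4 * u * (g + u : ℕ) : ℝ) ≤ (g + r : ℕ) := by exact_mod_cast h
    rw [mul_div_assoc', div_le_iff₀ hn]
    linarith
  have hsmall : ((g + u : ℕ) / (g + r : ℕ) : ℝ) ≤ 1 :=
    div_le_one_of_le₀ (by exact_mod_cast (by omega : g + u ≤ g + r)) hn.le
  calc 3 / 4 * ((g + r : ℕ) : ℝ) ^ u
      ≤ (1 + -((g + u : ℕ) / (g + r : ℕ) : ℝ)) ^ u * ((g + r : ℕ) : ℝ) ^ u := by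
        gcongr
        linarith [one_add_mul_le_pow (a := -((g + u : ℕ) / (g + r : ℕ) : ℝ)) (by linarith) u]
    _ = ((r - u : ℕ) : ℝ) ^ u := by
        rw [← mul_pow]
        congr 1
        rw [add_mul, neg_mul, div_mul_cancel₀ _ hn.ne', Nat.cast_sub hur]
        push_cast
        ring
    _ ≤ (r.descFactorial u : ℝ) := by
        exact_mod_cast (Nat.pow_le_pow_left (by omega) u).trans (Nat.pow_sub_le_descFactorial r u)

end Bounds

end RowPermanent

section Digits

variable {ι : Type*} [Fintype ι] [LinearOrder ι] [LocallyFiniteOrderBot ι] {M : ℕ} {E : ι → ℝ}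

lemma eq_zero_of_sum_mul_eq_zero (hE : ∀ t, M * ∑ i ∈ Iio t, |E i| < |E t|) {d : ι → ℤ}
    (hd : ∀ i, |d i| ≤ M) (hsum : ∑ i, d i * E i = 0) : d = 0 := by
  funext t
  induction t using WellFoundedGT.induction with | _ t ih
  have hsplit : d t * E t = -∑ i ∈ Iio t, d i * E i := by
    rw [eq_neg_iff_add_eq_zero, ← sum_insert (f := fun i => d i * E i) (by simp : t ∉ Iio t),
      Iio_insert, ← hsum]
    refine sum_subset (subset_univ _) fun i _ hi => ?_
    simp [ih i (by simpa using hi)]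
  have hlt : |(d t : ℝ)| * |E t| < 1 * |E t| := by
    calc |(d t : ℝ)| * |E t| = |∑ i ∈ Iio t, d i * E i| := by rw [← abs_mul, hsplit, abs_neg]
      _ ≤ ∑ i ∈ Iio t, |d i * E i| := abs_sum_le_sum_abs _ _
      _ ≤ ∑ i ∈ Iio t, M * |E i| := by
        refine sum_le_sum fun i _ => ?_
        rw [abs_mul]
        gcongr
        exact_mod_cast hd i
      _ < 1 * |E t| := by rw [← mul_sum, one_mul]; exact hE t
  have habs : |d t| < 1 := by exact_mod_cast lt_of_mul_lt_mul_right hlt (abs_nonneg _)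
  exact Int.abs_lt_one_iff.mp habs

lemma injective_sum_digit_mul (hE : ∀ t, M * ∑ i ∈ Iio t, |E i| < |E t|) :
    Function.Injective fun a : ι → Fin (M + 1) => ∑ i, (a i : ℝ) * E i := by
  intro a b hab
  have hzero : (fun i => (a i : ℤ) - (b i : ℤ)) = 0 := by
    refine eq_zero_of_sum_mul_eq_zero hE (fun i => by rw [abs_le]; omega) ?_
    push_cast
    simp_rw [sub_mul, sum_sub_distrib]
    exact sub_eq_zero.mpr hab
  funext i
  have hi : (a i : ℤ) - (b i : ℤ) = 0 := congrFun hzero i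
  omega

end Digits

lemma mul_sum_abs_lt_of_pow_bounds {k M : ℕ} {E : Fin (k + 1) → ℝ} {D N : ℝ} (hN : 1 ≤ N)
    (hupper : ∀ t, |E t| ≤ D * N ^ (t : ℕ)) (hlower : ∀ t : Fin (k + 1), N ^ (t : ℕ) ≤ 2 * |E t|)
    (hM : 2 * M * (k * D) < N) (t : Fin (k + 1)) :
    M * ∑ i ∈ Iio t, |E i| < |E t| := by
  have hD : 0 ≤ D := by simpa using (abs_nonneg _).trans (hupper 0)
  induction t using Fin.cases with
  | zero =>
    have h := hlower 0
    simp only [Fin.val_zero, pow_zero] at h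
    have hIio : Iio (0 : Fin (k + 1)) = ∅ := Iio_bot
    rw [hIio, sum_empty, mul_zero]
    linarith
  | succ s =>
    have hsum : ∑ i ∈ Iio s.succ, |E i| ≤ k * (D * N ^ (s : ℕ)) := by
      calc ∑ i ∈ Iio s.succ, |E i| ≤ ∑ _i ∈ Iio s.succ, D * N ^ (s : ℕ) := by
            refine sum_le_sum fun i hi => (hupper i).trans ?_
            have his : (i : ℕ) ≤ s := Nat.lt_succ_iff.mp (Fin.lt_def.mp (mem_Iio.mp hi))
            gcongr
        _ ≤ k * (D * N ^ (s : ℕ)) := by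
            rw [sum_const, nsmul_eq_mul, Fin.card_Iio, Fin.val_succ]
            gcongr
            exact_mod_cast s.isLt
    calc M * ∑ i ∈ Iio s.succ, |E i| ≤ M * (k * (D * N ^ (s : ℕ))) := by gcongr
      _ = 2 * M * (k * D) * N ^ (s : ℕ) / 2 := by ring
      _ < N * N ^ (s : ℕ) / 2 := by gcongr
      _ = N ^ (s.succ : ℕ) / 2 := by rw [Fin.val_succ, pow_succ']
      _ ≤ |E s.succ| := by linarith [hlower s.succ]

lemma sum_prod_mul_prod_intUnits {ι : Type*} [Fintype ι] [DecidableEq ι] (S T : Finset ι) :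
    ∑ c : ι → ℤˣ, (∏ i ∈ S, ((c i : ℤ) : ℝ)) * ∏ i ∈ T, ((c i : ℤ) : ℝ) =
      if S = T then 2 ^ Fintype.card ι else 0 := by
  let F (i : ι) (u : ℤˣ) : ℝ :=
    (if i ∈ S then ((u : ℤ) : ℝ) else 1) * if i ∈ T then ((u : ℤ) : ℝ) else 1
  have hsum (i : ι) : ∑ u, F i u = if i ∈ S ↔ i ∈ T then 2 else 0 := by
    by_cases hS : i ∈ S <;> by_cases hT : i ∈ T <;> norm_num [F, hS, hT]
  calc ∑ c : ι → ℤˣ, (∏ i ∈ S, ((c i : ℤ) : ℝ)) * ∏ i ∈ T, ((c i : ℤ) : ℝ)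
      = ∑ c : ι → ℤˣ, ∏ i, F i (c i) := by
        simp only [F, prod_mul_distrib, prod_ite_mem, univ_inter]
    _ = ∏ i, if i ∈ S ↔ i ∈ T then (2 : ℝ) else 0 := by
        simp_rw [← Fintype.prod_sum, hsum]
    _ = if S = T then 2 ^ Fintype.card ι else 0 := by
        split_ifs with h
        · simp [h]
        · obtain ⟨i, hi⟩ := not_forall.mp (mt Finset.ext h)
          exact prod_eq_zero (mem_univ i) (if_neg hi)

section PermCount

variable {k n : ℕ}

lemma finite_setOf_rperm (k n : ℕ) : {x : ℝ | ∃ A : Matrix (Fin k) (Fin n) ℝ,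
    (∀ i j, A i j = 1 ∨ A i j = -1) ∧ rperm A = x}.Finite := by
  have hmatrices : {A : Matrix (Fin k) (Fin n) ℝ |
      ∀ i, A i ∈ {v : Fin n → ℝ | ∀ j, v j ∈ ({1, -1} : Set ℝ)}}.Finite :=
    Set.Finite.pi' fun _ => Set.Finite.pi' fun _ => Set.toFinite _
  exact hmatrices.image rperm

lemma permCount_pos (k n : ℕ) : 0 < permCount k n :=
  (Set.ncard_pos (finite_setOf_rperm k n)).mpr ⟨_, fun _ _ => 1, fun _ _ => Or.inl rfl, rfl⟩

lemma rperm_submatrix_equiv {κ : Type*} [Fintype κ] (A : Matrix (Fin k) κ ℝ) (e : Fin n ≃ κ) :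
    rperm (A.submatrix id e) = rowPerm A univ := by
  let e' : Fin k ≃ (univ : Finset (Fin k)) := (Equiv.subtypeUnivEquiv mem_univ).symm
  refine Fintype.sum_equiv (Equiv.embeddingCongr e' e) _ _ fun σ => ?_
  exact Fintype.prod_equiv e' _ _ fun i => by simp [e']

lemma card_le_permCount_of_injective {α κ : Type*} [Fintype α] [Fintype κ]
    {B : α → Matrix (Fin k) κ ℝ} (hB : ∀ a i j, B a i j = 1 ∨ B a i j = -1)
    (hinj : Function.Injective fun a => rowPerm (B a) univ) :
    Fintype.card α ≤ permCount k (Fintype.card κ) := by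
  let e := (Fintype.equivFin κ).symm
  rw [← Nat.card_eq_fintype_card, ← Set.ncard_univ, ← Set.ncard_image_of_injective _ hinj]
  refine Set.ncard_le_ncard ?_ (finite_setOf_rperm k _)
  rintro _ ⟨a, -, rfl⟩
  exact ⟨(B a).submatrix id e, fun i j => hB a i (e j), rperm_submatrix_equiv (B a) e⟩

end PermCount

section Construction

/-- The columns of the construction. For each level `t : Fin (k + 1)` there are `M` blocks, each
consisting of one column per sign vector; the other `r` columns are constantly `1`. -/
abbrev BlockColumn (k M r : ℕ) : Type :=
  (Fin (k + 1) × Fin M × (Fin (k + 1) → ℤˣ)) ⊕ Fin r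

/-- The `±1` matrix whose column for a sign vector is that vector and whose remaining columns are
constantly `1`. Its row `0` is a placeholder, to be replaced by a `digitRow`. -/
noncomputable def blockMatrix (k M r : ℕ) : Matrix (Fin (k + 1)) (BlockColumn k M r) ℝ :=
  Matrix.of fun i => Sum.elim (fun x => ((x.2.2 i : ℤ) : ℝ)) 1

/-- The row encoding the digits `a`. On a block of level `t` it is plus or minus the product of the
rows `s > t` of `blockMatrix`, the sign being positive on exactly `a t` of the `M` blocks. -/
noncomputable def digitRow {k M : ℕ} (r : ℕ) (a : Fin (k + 1) → Fin (M + 1)) :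
    BlockColumn k M r → ℝ :=
  Sum.elim (fun x => (if (x.2.1 : ℕ) < a x.1 then 1 else -1) *
    ∏ s ∈ Ioi x.1, ((x.2.2 s : ℤ) : ℝ)) 1

/-- The factor by which the digit of level `t` contributes to the permanent: the coefficient of
`S = Ioi t` in the expansion `rowPerm_insert_updateRow` along row `0` of `blockMatrix`, so that the
rows left over are those in `Ioc 0 t`. -/
noncomputable def digitWeight (k M r : ℕ) (t : Fin (k + 1)) : ℝ :=
  (-1) ^ #(Ioi t) * ((#(Ioi t)).factorial : ℝ) * rowPerm (blockMatrix k M r) (Ioc 0 t)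

variable {k M r : ℕ}

lemma intUnits_cast_eq_one_or (u : ℤˣ) : ((u : ℤ) : ℝ) = 1 ∨ ((u : ℤ) : ℝ) = -1 := by
  obtain rfl | rfl := Int.units_eq_one_or u <;> simp

lemma blockMatrix_eq_one_or (i : Fin (k + 1)) (j : BlockColumn k M r) :
    blockMatrix k M r i j = 1 ∨ blockMatrix k M r i j = -1 := by
  cases j with
  | inl x => exact intUnits_cast_eq_one_or (x.2.2 i)
  | inr _ => exact Or.inl rfl

lemma abs_blockMatrix_le_one (i : Fin (k + 1)) (j : BlockColumn k M r) :
    |blockMatrix k M r i j| ≤ 1 := by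
  obtain h | h := blockMatrix_eq_one_or i j <;> simp [h]

lemma digitRow_eq_one_or (a : Fin (k + 1) → Fin (M + 1)) (j : BlockColumn k M r) :
    digitRow r a j = 1 ∨ digitRow r a j = -1 := by
  cases j with
  | inl x =>
    have hsign := intUnits_cast_eq_one_or
      ((if (x.2.1 : ℕ) < a x.1 then 1 else -1) * ∏ s ∈ Ioi x.1, x.2.2 s)
    push_cast at hsign
    simpa only [digitRow, Sum.elim_inl, apply_ite Units.val, apply_ite (Int.cast (R := ℝ)),
      Units.val_one, Units.val_neg, Int.cast_one, Int.cast_neg] using hsign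
  | inr _ => exact Or.inl rfl

lemma updateRow_digitRow_eq_one_or (a : Fin (k + 1) → Fin (M + 1)) (i : Fin (k + 1))
    (j : BlockColumn k M r) :
    (blockMatrix k M r).updateRow 0 (digitRow r a) i j = 1 ∨
      (blockMatrix k M r).updateRow 0 (digitRow r a) i j = -1 := by
  rw [Matrix.updateRow_apply]
  split_ifs
  · exact digitRow_eq_one_or a j
  · exact blockMatrix_eq_one_or i j

lemma card_blockColumn (k M r : ℕ) :
    Fintype.card (BlockColumn k M r) = (k + 1) * (M * 2 ^ (k + 1)) + r := by
  simp

lemma sum_ite_lt_one_neg_one (d : Fin (M + 1)) :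
    ∑ l : Fin M, (if (l : ℕ) < d then (1 : ℝ) else -1) = 2 * d - M := by
  have hentry (l : Fin M) : (if (l : ℕ) < d then (1 : ℝ) else -1) =
      2 * (if (l : ℕ) < d then 1 else 0) - 1 := by
    split_ifs <;> norm_num
  simp_rw [hentry, sum_sub_distrib, ← mul_sum, sum_boole, Fin.card_filter_val_lt,
    min_eq_right (Nat.lt_succ_iff.mp d.isLt)]
  simp

lemma sum_digitRow_mul_prod_blockMatrix (a : Fin (k + 1) → Fin (M + 1))
    (S : Finset (Fin (k + 1))) :
    ∑ j, digitRow r a j * ∏ i ∈ S, blockMatrix k M r i j =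
      r + ∑ t, if Ioi t = S then (2 * (a t : ℝ) - M) * 2 ^ (k + 1) else 0 := by
  have hblock (t : Fin (k + 1)) : ∑ l, ∑ c : Fin (k + 1) → ℤˣ,
      digitRow r a (.inl (t, l, c)) * ∏ i ∈ S, blockMatrix k M r i (.inl (t, l, c)) =
        if Ioi t = S then (2 * (a t : ℝ) - M) * 2 ^ (k + 1) else 0 := by
    calc ∑ l, ∑ c : Fin (k + 1) → ℤˣ,
          digitRow r a (.inl (t, l, c)) * ∏ i ∈ S, blockMatrix k M r i (.inl (t, l, c))
        = ∑ l : Fin M, (if (l : ℕ) < a t then (1 : ℝ) else -1) * ∑ c : Fin (k + 1) → ℤˣ,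
            (∏ s ∈ Ioi t, ((c s : ℤ) : ℝ)) * ∏ i ∈ S, ((c i : ℤ) : ℝ) := by
          simp only [digitRow, blockMatrix, Sum.elim_inl, Matrix.of_apply, mul_assoc, mul_sum]
      _ = _ := by
          rw [← sum_mul, sum_ite_lt_one_neg_one, sum_prod_mul_prod_intUnits, Fintype.card_fin,
            mul_ite, mul_zero]
  rw [Fintype.sum_sum_type, add_comm]
  simp_rw [Fintype.sum_prod_type, hblock]
  simp [digitRow, blockMatrix]

lemma exists_rowPerm_digitRow_eq (k M r : ℕ) : ∃ c : ℝ, ∀ a : Fin (k + 1) → Fin (M + 1),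
    rowPerm ((blockMatrix k M r).updateRow 0 (digitRow r a)) univ =
      c + 2 ^ (k + 2) * ∑ t, (a t : ℝ) * digitWeight k M r t := by
  let coeff (S : Finset (Fin (k + 1))) : ℝ :=
    (-1) ^ #S * ((#S).factorial : ℝ) * rowPerm (blockMatrix k M r) (Ioi 0 \ S)
  have hcoeff (t : Fin (k + 1)) : coeff (Ioi t) = digitWeight k M r t := by
    have hrows : Ioi 0 \ Ioi t = Ioc 0 t := by ext; simp
    simp only [coeff, digitWeight, hrows]
  have hlevel (t : Fin (k + 1)) : Ioi t ∈ (Ioi (0 : Fin (k + 1))).powerset :=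
    mem_powerset.mpr (Ioi_subset_Ioi (Fin.zero_le t))
  refine ⟨(∑ S ∈ (Ioi 0).powerset, coeff S * r) -
    ∑ t, M * 2 ^ (k + 1) * digitWeight k M r t, fun a => ?_⟩
  have huniv : (univ : Finset (Fin (k + 1))) = insert 0 (Ioi 0) := by
    rw [Ioi_insert]; exact Ici_bot.symm
  calc rowPerm ((blockMatrix k M r).updateRow 0 (digitRow r a)) univ
      = rowPerm ((blockMatrix k M r).updateRow 0 (digitRow r a)) (insert 0 (Ioi 0)) := by
        rw [huniv]
    _ = ∑ S ∈ (Ioi 0).powerset,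
          coeff S * (r + ∑ t, if Ioi t = S then (2 * (a t : ℝ) - M) * 2 ^ (k + 1) else 0) := by
        rw [rowPerm_insert_updateRow _ _ notMem_Ioi_self]
        simp_rw [sum_digitRow_mul_prod_blockMatrix, coeff]
        exact sum_congr rfl fun S _ => by ring
    _ = (∑ S ∈ (Ioi 0).powerset, coeff S * r) +
          ∑ t, digitWeight k M r t * ((2 * (a t : ℝ) - M) * 2 ^ (k + 1)) := by
        simp_rw [mul_add, sum_add_distrib, mul_sum, mul_ite, mul_zero]
        rw [sum_comm]
        simp_rw [sum_ite_eq, hlevel, if_true, hcoeff]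
    _ = _ := by
        rw [sub_add, mul_sum, ← sum_sub_distrib, sub_eq_add_neg, ← sum_neg_distrib]
        congr 1
        exact sum_congr rfl fun t _ => by ring

lemma abs_digitWeight (t : Fin (k + 1)) : |digitWeight k M r t| =
    (#(Ioi t)).factorial * |rowPerm (blockMatrix k M r) (Ioc 0 t)| := by
  simp [digitWeight, abs_mul]

lemma abs_digitWeight_le (t : Fin (k + 1)) : |digitWeight k M r t| ≤
    k.factorial * (((k + 1) * (M * 2 ^ (k + 1)) + r : ℕ) : ℝ) ^ (t : ℕ) := by
  have hperm := abs_rowPerm_le (A := blockMatrix k M r) abs_blockMatrix_le_one (Ioc 0 t)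
  rw [card_blockColumn, Fin.card_Ioc, Fin.val_zero, Nat.sub_zero] at hperm
  rw [abs_digitWeight]
  gcongr
  rw [Fin.card_Ioi]
  omega

lemma pow_le_two_mul_abs_digitWeight
    (hr : 4 * k * ((k + 1) * (M * 2 ^ (k + 1)) + k) ≤ (k + 1) * (M * 2 ^ (k + 1)) + r)
    (t : Fin (k + 1)) :
    (((k + 1) * (M * 2 ^ (k + 1)) + r : ℕ) : ℝ) ^ (t : ℕ) ≤ 2 * |digitWeight k M r t| := by
  have htk : (t : ℕ) ≤ k := Nat.lt_succ_iff.mp t.isLt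
  have hperm := two_mul_descFactorial_sub_le_rowPerm (A := blockMatrix k M r)
    abs_blockMatrix_le_one (Function.Embedding.inr : Fin r ↪ _) (fun _ _ => rfl) (Ioc 0 t)
  rw [card_blockColumn, Fin.card_Ioc, Fin.val_zero, Nat.sub_zero, Fintype.card_fin] at hperm
  set g := (k + 1) * (M * 2 ^ (k + 1))
  have hones : 3 / 4 * ((g + r : ℕ) : ℝ) ^ (t : ℕ) ≤ r.descFactorial t :=
    three_quarters_mul_pow_le_descFactorial (le_trans (by gcongr) hr)
  have hall : ((g + r).descFactorial t : ℝ) ≤ ((g + r : ℕ) : ℝ) ^ (t : ℕ) := by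
    exact_mod_cast Nat.descFactorial_le_pow _ _
  have hfact : (1 : ℝ) ≤ (#(Ioi t)).factorial := by exact_mod_cast Nat.factorial_pos _
  calc ((g + r : ℕ) : ℝ) ^ (t : ℕ) ≤ 2 * (1 * |rowPerm (blockMatrix k M r) (Ioc 0 t)|) := by
        linarith [le_abs_self (rowPerm (blockMatrix k M r) (Ioc 0 t))]
    _ ≤ 2 * |digitWeight k M r t| := by
        rw [abs_digitWeight]
        gcongr

lemma injective_rowPerm_digitRow
    (hr : 4 * k * ((k + 1) * (M * 2 ^ (k + 1)) + k) ≤ (k + 1) * (M * 2 ^ (k + 1)) + r)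
    (hM : 2 * M * (k * k.factorial) < (k + 1) * (M * 2 ^ (k + 1)) + r) :
    Function.Injective fun a : Fin (k + 1) → Fin (M + 1) =>
      rowPerm ((blockMatrix k M r).updateRow 0 (digitRow r a)) univ := by
  obtain ⟨c, hc⟩ := exists_rowPerm_digitRow_eq k M r
  simp_rw [hc]
  have hpow : (2 : ℝ) ^ (k + 2) ≠ 0 := by positivity
  have hN : (1 : ℝ) ≤ ((k + 1) * (M * 2 ^ (k + 1)) + r : ℕ) := by
    exact_mod_cast Nat.one_le_of_lt hM
  exact ((add_right_injective (c : ℝ)).comp (mul_right_injective₀ hpow)).comp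
    (injective_sum_digit_mul (mul_sum_abs_lt_of_pow_bounds hN abs_digitWeight_le
      (pow_le_two_mul_abs_digitWeight hr) (by exact_mod_cast hM)))

theorem add_one_pow_le_permCount
    (hr : 4 * k * ((k + 1) * (M * 2 ^ (k + 1)) + k) ≤ (k + 1) * (M * 2 ^ (k + 1)) + r)
    (hM : 2 * M * (k * k.factorial) < (k + 1) * (M * 2 ^ (k + 1)) + r) :
    (M + 1) ^ (k + 1) ≤ permCount (k + 1) ((k + 1) * (M * 2 ^ (k + 1)) + r) := by
  rw [← card_blockColumn]
  simpa only [Fintype.card_fun, Fintype.card_fin] using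
    card_le_permCount_of_injective updateRow_digitRow_eq_one_or (injective_rowPerm_digitRow hr hM)

end Construction

section Constants

variable {k : ℕ}

lemma two_pow_mul_sq_le (hk : 1 ≤ k) : 8 * (2 ^ k * k ^ 2) ≤ (16 * k ^ 5) ^ k := by
  calc 8 * (2 ^ k * k ^ 2) ≤ 8 ^ k * (2 ^ k * (k ^ 5) ^ k) := by
        gcongr ?_ * (_ * ?_)
        · exact Nat.le_self_pow (by omega) _
        · rw [← pow_mul]
          exact Nat.pow_le_pow_right hk (by omega)
    _ = (16 * k ^ 5) ^ k := by rw [← mul_pow, ← mul_pow]; ring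

lemma mul_factorial_le (hk : 1 ≤ k) : k * k.factorial ≤ (16 * k ^ 5) ^ k := by
  calc k * k.factorial ≤ k * k ^ k := by gcongr; exact Nat.factorial_le_pow k
    _ = k ^ (1 + k) := by rw [pow_add, pow_one]
    _ ≤ k ^ (5 * k) := Nat.pow_le_pow_right hk (by omega)
    _ = (k ^ 5) ^ k := pow_mul ..
    _ ≤ (16 * k ^ 5) ^ k := by gcongr; omega

theorem div_add_one_pow_le_permCount (hk : 1 ≤ k) (n : ℕ) :
    (n / (4 * (16 * k ^ 5) ^ k) + 1) ^ (k + 1) ≤ permCount (k + 1) n := by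
  have hn : 4 * (16 * k ^ 5) ^ k * (n / (4 * (16 * k ^ 5) ^ k)) ≤ n := Nat.mul_div_le _ _
  generalize n / (4 * (16 * k ^ 5) ^ k) = M at hn ⊢
  obtain rfl | hM := M.eq_zero_or_pos
  · simpa only [zero_add, one_pow] using Nat.one_le_iff_ne_zero.mpr (permCount_pos (k + 1) n).ne'
  have hcolumns : 4 * k * ((k + 1) * (M * 2 ^ (k + 1)) + k) ≤ n := by
    calc 4 * k * ((k + 1) * (M * 2 ^ (k + 1)) + k)
        ≤ 4 * k * ((k + k) * (M * 2 ^ (k + 1)) + k * (M * 2 ^ (k + 1))) := by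
          gcongr
          exact Nat.le_mul_of_pos_right k (by positivity)
      _ = 24 * (2 ^ k * k ^ 2 * M) := by ring
      _ ≤ 4 * (8 * (2 ^ k * k ^ 2)) * M := by linarith [Nat.zero_le (2 ^ k * k ^ 2 * M)]
      _ ≤ 4 * (16 * k ^ 5) ^ k * M := by gcongr; exact two_pow_mul_sq_le hk
      _ ≤ n := hn
  have hdigits : 2 * M * (k * k.factorial) < n := by
    have hpos : 0 < (16 * k ^ 5) ^ k := by positivity
    calc 2 * M * (k * k.factorial) ≤ 2 * M * (16 * k ^ 5) ^ k := by
          gcongr; exact mul_factorial_le hk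
      _ < 4 * (16 * k ^ 5) ^ k * M := by nlinarith [Nat.mul_pos hpos hM]
      _ ≤ n := hn
  have hblocks : (k + 1) * (M * 2 ^ (k + 1)) ≤ n := by nlinarith
  obtain ⟨r, rfl⟩ := Nat.exists_eq_add_of_le hblocks
  exact add_one_pow_le_permCount hcolumns hdigits

lemma rpow_neg_le_inv_pow (hk : 2 ≤ k) {m : ℕ} (hm : m ≤ k + 1) :
    (k : ℝ) ^ (-(15 * (k : ℝ) ^ 2)) ≤ ((4 * (16 * (k : ℝ) ^ 5) ^ k)⁻¹) ^ m := by
  have hk1 : (1 : ℝ) ≤ k := by exact_mod_cast (by omega : 1 ≤ k)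
  have hfour : (4 : ℝ) ≤ k ^ 2 := by exact_mod_cast Nat.pow_le_pow_left hk 2
  have hsixteen : (16 : ℝ) ≤ k ^ 4 := by exact_mod_cast Nat.pow_le_pow_left hk 4
  have hexp : (2 + 9 * k) * m ≤ 15 * k ^ 2 := by nlinarith
  rw [Real.rpow_neg (by positivity), inv_pow]
  gcongr
  calc (4 * (16 * (k : ℝ) ^ 5) ^ k) ^ m ≤ (k ^ 2 * (k ^ 4 * k ^ 5) ^ k) ^ m := by gcongr
    _ = (k : ℝ) ^ ((2 + 9 * k) * m) := by ring
    _ ≤ (k : ℝ) ^ (15 * k ^ 2) := pow_le_pow_right₀ hk1 hexp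
    _ = (k : ℝ) ^ (15 * (k : ℝ) ^ 2) := by rw [← Real.rpow_natCast]; push_cast; rfl

end Constants

theorem inv_pow_mul_pow_le_permCount {k : ℕ} (hk : 1 ≤ k) (n : ℕ) {m : ℕ} (hm : m ≤ k + 1) :
    ((4 * (16 * (k : ℝ) ^ 5) ^ k)⁻¹) ^ m * (n : ℝ) ^ m ≤ permCount (k + 1) n := by
  obtain ⟨N, hN⟩ : ∃ N, N = 4 * (16 * k ^ 5) ^ k := ⟨_, rfl⟩
  have hNpos : 0 < N := by rw [hN]; positivity
  have hfloor : (N : ℝ)⁻¹ * n ≤ (n / N + 1 : ℕ) := by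
    rw [inv_mul_le_iff₀ (by exact_mod_cast hNpos)]
    exact_mod_cast (Nat.lt_mul_div_succ n hNpos).le
  calc ((4 * (16 * (k : ℝ) ^ 5) ^ k)⁻¹) ^ m * (n : ℝ) ^ m = ((N : ℝ)⁻¹ * n) ^ m := by
        rw [hN, ← mul_pow]; push_cast; rfl
    _ ≤ ((n / N + 1 : ℕ) : ℝ) ^ m := by gcongr
    _ ≤ ((n / N + 1 : ℕ) : ℝ) ^ (k + 1) := by
        exact_mod_cast Nat.pow_le_pow_right (Nat.succ_pos _) hm
    _ ≤ permCount (k + 1) n := by exact_mod_cast hN ▸ div_add_one_pow_le_permCount hk n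

theorem stmt17_general :
    ∃ C : ℝ, 0 < C ∧ ∀ k : ℕ, 2 ≤ k → ∀ n m : ℕ, m ≤ k + 1 →
      (k : ℝ) ^ (-(C * (k : ℝ) ^ 2)) * (n : ℝ) ^ m ≤ (permCount (k + 1) n : ℝ) ∧
      ((4 * (16 * (k : ℝ) ^ 5) ^ k)⁻¹) ^ m * (n : ℝ) ^ m ≤ (permCount (k + 1) n : ℝ) := by
  refine ⟨15, by norm_num, fun k hk n m hm => ?_⟩
  have hexplicit := inv_pow_mul_pow_le_permCount (by omega : 1 ≤ k) n hm
  refine ⟨le_trans ?_ hexplicit, hexplicit⟩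
  gcongr
  exact rpow_neg_le_inv_pow hk hm

/-- There is an absolute constant `C > 0` such that for all `k ≥ 3` and `n ≥ k + 1`,
`r_{k+1,n} ≥ k^(−C k²) · n^(k−2)`; in particular one may take the explicit bound
`r_{k+1,n} ≥ (4·(16k⁵)^k)^{−(k−2)} · n^(k−2)`. -/
theorem stmt17 :
    ∃ C : ℝ, 0 < C ∧ ∀ k : ℕ, 3 ≤ k → ∀ n : ℕ, k + 1 ≤ n →
      (k : ℝ) ^ (-(C * (k : ℝ) ^ 2)) * (n : ℝ) ^ (k - 2) ≤ (permCount (k + 1) n : ℝ) ∧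
      ((4 * (16 * (k : ℝ) ^ 5) ^ k)⁻¹) ^ (k - 2) * (n : ℝ) ^ (k - 2) ≤
        (permCount (k + 1) n : ℝ) := by
  obtain ⟨C, hC, hbounds⟩ := stmt17_general
  exact ⟨C, hC, fun k hk n _ => hbounds k (by omega) n (k - 2) (by omega)⟩
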